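/- arXiv:1905.07616 — 5 statements merged into one kernel-verified Lean document; each statement's English description precedes it below -/
import Mathlib

section
/- The number of Straight Flush hands — 5-card hands whose cards all have the same suit and whose set of values is a straight value-set other than {8,9,10,11,12} (so the hand is not a Royal Flush) — equals 36. -/
/-- A card is a pair of a value in `Fin 13` (values 0–12 representing
2,3,4,5,6,7,8,9,10,J,Q,K,A) and a suit in `Fin 4`. -/
abbrev Card : Type := Fin 13 × Fin 4

/-- The set of all 5-card poker hands: 5-element subsets of the 52-card deck. -/
def pokerHands : Finset (Finset Card) :=
  (Finset.univ : Finset Card).powersetCard 5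

/-- The set of values appearing in a hand. -/
def handValues (h : Finset Card) : Finset (Fin 13) := h.image Prod.fst

/-- The number of cards of the hand `h` having value `v`. -/
def countValue (h : Finset Card) (v : Fin 13) : ℕ :=
  (h.filter fun c => c.1 = v).card

/-- All cards of the hand have the same suit. -/
def SameSuit (h : Finset Card) : Prop := ∃ s : Fin 4, ∀ c ∈ h, c.2 = s

instance : DecidablePred SameSuit := fun h =>
  inferInstanceAs (Decidable (∃ s : Fin 4, ∀ c ∈ h, c.2 = s))

/-- The 10 straight value-sets: `{12,0,1,2,3}` (representing A,2,3,4,5) and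
`{i,i+1,i+2,i+3,i+4}` for `0 ≤ i ≤ 8`. -/
def straightValueSets : Finset (Finset (Fin 13)) :=
  { ({12, 0, 1, 2, 3} : Finset (Fin 13)),
    {0, 1, 2, 3, 4}, {1, 2, 3, 4, 5}, {2, 3, 4, 5, 6}, {3, 4, 5, 6, 7},
    {4, 5, 6, 7, 8}, {5, 6, 7, 8, 9}, {6, 7, 8, 9, 10}, {7, 8, 9, 10, 11},
    {8, 9, 10, 11, 12} }

/-- Royal Flush: the set of values is exactly `{8,9,10,11,12}`
(i.e. 10, J, Q, K, A) and all cards have the same suit. -/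
def RoyalFlush (h : Finset Card) : Prop :=
  handValues h = {8, 9, 10, 11, 12} ∧ SameSuit h

/-- Straight Flush: all cards have the same suit and the set of values is a
straight value-set other than `{8,9,10,11,12}`. -/
def StraightFlush (h : Finset Card) : Prop :=
  SameSuit h ∧ handValues h ∈ straightValueSets ∧
    handValues h ≠ ({8, 9, 10, 11, 12} : Finset (Fin 13))

/-- Four of a Kind: for some value `v`, the hand contains all 4 cards of
value `v` plus one additional card of a different value. -/
def FourOfAKind (h : Finset Card) : Prop :=
  ∃ v : Fin 13, countValue h v = 4 ∧ ∃ c ∈ h, c.1 ≠ v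

/-- Full House: there are distinct values `v ≠ w` such that exactly 3 cards
of the hand have value `v` and exactly 2 cards have value `w`. -/
def FullHouse (h : Finset Card) : Prop :=
  ∃ v w : Fin 13, v ≠ w ∧ countValue h v = 3 ∧ countValue h w = 2

/-- Flush: all cards have the same suit and the set of values is not a
straight value-set. -/
def Flush (h : Finset Card) : Prop :=
  SameSuit h ∧ handValues h ∉ straightValueSets

/-- Straight: the set of values is a straight value-set but the cards are
not all of the same suit. -/
def Straight (h : Finset Card) : Prop :=
  handValues h ∈ straightValueSets ∧ ¬ SameSuit h

/-- Three of a Kind: for some value `v`, exactly 3 cards of the hand have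
value `v` and the remaining 2 cards have two further distinct values. -/
def ThreeOfAKind (h : Finset Card) : Prop :=
  ∃ v : Fin 13, countValue h v = 3 ∧
    ∃ a b : Fin 13, a ≠ b ∧ a ≠ v ∧ b ≠ v ∧
      countValue h a = 1 ∧ countValue h b = 1

/-- Two Pair: there are distinct values `v ≠ w` such that exactly 2 cards of
the hand have value `v`, exactly 2 cards have value `w`, and the remaining
card has a value different from both. -/
def TwoPair (h : Finset Card) : Prop :=
  ∃ v w : Fin 13, v ≠ w ∧ countValue h v = 2 ∧ countValue h w = 2 ∧
    ∃ c ∈ h, c.1 ≠ v ∧ c.1 ≠ w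

/-- Pair: for some value `v`, exactly 2 cards of the hand have value `v` and
the remaining 3 cards have three further pairwise distinct values. -/
def Pair (h : Finset Card) : Prop :=
  ∃ v : Fin 13, countValue h v = 2 ∧
    ∃ a b c : Fin 13, a ≠ b ∧ a ≠ c ∧ b ≠ c ∧ a ≠ v ∧ b ≠ v ∧ c ≠ v ∧
      countValue h a = 1 ∧ countValue h b = 1 ∧ countValue h c = 1

/-- High Card: the 5 cards have 5 pairwise distinct values, the set of values
is not a straight value-set, and the cards are not all of the same suit. -/
def HighCard (h : Finset Card) : Prop :=
  (handValues h).card = 5 ∧ handValues h ∉ straightValueSets ∧ ¬ SameSuit h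

instance : DecidablePred RoyalFlush := fun h => by unfold RoyalFlush; infer_instance

instance : DecidablePred StraightFlush := fun h => by unfold StraightFlush; infer_instance

instance : DecidablePred FourOfAKind := fun h => by unfold FourOfAKind; infer_instance

instance : DecidablePred FullHouse := fun h => by unfold FullHouse; infer_instance

instance : DecidablePred Flush := fun h => by unfold Flush; infer_instance

instance : DecidablePred Straight := fun h => by unfold Straight; infer_instance

instance : DecidablePred ThreeOfAKind := fun h => by unfold ThreeOfAKind; infer_instance

instance : DecidablePred TwoPair := fun h => by unfold TwoPair; infer_instance

instance : DecidablePred Pair := fun h => by unfold Pair; infer_instance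

instance : DecidablePred HighCard := fun h => by unfold HighCard; infer_instance

/-- Every straight value-set has five elements. -/
theorem card_of_mem_straightValueSets : ∀ V ∈ straightValueSets, V.card = 5 := by
  intro V hV
  simp only [straightValueSets, Finset.mem_insert, Finset.mem_singleton] at hV
  rcases hV with rfl | rfl | rfl | rfl | rfl | rfl | rfl | rfl | rfl | rfl <;> rfl

/-- A straight flush is a straight value-set (not the royal one) times one suit. -/
theorem straightFlush_eq_image :
    pokerHands.filter StraightFlush =
      ((straightValueSets.erase {8, 9, 10, 11, 12}) ×ˢ (Finset.univ : Finset (Fin 4))).image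
        (fun p => p.1 ×ˢ ({p.2} : Finset (Fin 4))) := by
  have h5 := card_of_mem_straightValueSets
  ext h
  simp only [pokerHands, StraightFlush, SameSuit, Finset.mem_filter, Finset.mem_powersetCard,
    Finset.mem_image, Finset.mem_product, Finset.mem_erase, Finset.mem_univ, and_true, Prod.exists]
  constructor
  · rintro ⟨-, ⟨s, hs⟩, hV, hne⟩
    refine ⟨handValues h, s, ⟨hne, hV⟩, ?_⟩
    ext ⟨v, t⟩
    simp only [handValues, Finset.mem_product, Finset.mem_image, Finset.mem_singleton]
    constructor
    · rintro ⟨⟨⟨a, b⟩, hc, rfl⟩, rfl⟩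
      have hb : b = t := hs _ hc
      rw [← hb]
      exact hc
    · intro hc
      exact ⟨⟨_, hc, rfl⟩, hs _ hc⟩
  · rintro ⟨V, s, ⟨hne, hV⟩, rfl⟩
    have hv : handValues (V ×ˢ {s}) = V := by
      ext v
      simp [handValues]
    rw [hv]
    refine ⟨⟨Finset.subset_univ _, ?_⟩, ⟨s, ?_⟩, hV, hne⟩
    · simp [h5 V hV]
    · intro c hc
      simpa using (Finset.mem_product.1 hc).2

/-- There are exactly 36 Straight Flush hands. -/
theorem card_straightFlush : (pokerHands.filter StraightFlush).card = 36 := by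
  have h5 := card_of_mem_straightValueSets
  rw [straightFlush_eq_image, Finset.card_image_of_injOn]
  · rfl
  · rintro ⟨V, s⟩ hV ⟨W, t⟩ - he
    have hV' : V ∈ straightValueSets :=
      Finset.mem_of_mem_erase (Finset.mem_product.1 (Finset.mem_coe.1 hV)).1
    have hc := h5 V hV'
    obtain ⟨v, hv⟩ : V.Nonempty := Finset.card_pos.1 (by omega)
    have hm : ∀ a b, (a ∈ V ∧ b = s) ↔ (a ∈ W ∧ b = t) := by
      intro a b
      have := Finset.ext_iff.1 he (a, b)
      simpa only [Finset.mem_product, Finset.mem_singleton] using this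
    have hst : s = t := ((hm v s).1 ⟨hv, rfl⟩).2
    subst hst
    have hVW : V = W := by
      ext a
      simpa using hm a s
    rw [hVW]
end

section
/- The number of Flush hands — 5-card hands whose cards all have the same suit and whose set of values is not a straight value-set (so the hand is neither a Royal Flush nor a Straight Flush) — equals 5108. -/
set_option linter.constructorNameAsVariable false

/-- There are exactly 5108 Flush hands. -/
theorem card_flush : (pokerHands.filter Flush).card = 5108 := by
  have key : pokerHands.filter Flush =
      (((Finset.univ : Finset (Fin 13)).powersetCard 5 \ straightValueSets) ×ˢ
        (Finset.univ : Finset (Fin 4))).image (fun p => p.1 ×ˢ ({p.2} : Finset (Fin 4))) := by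
    ext h
    simp only [pokerHands, Finset.mem_filter, Finset.mem_powersetCard, Finset.mem_image,
      Finset.mem_product, Finset.mem_sdiff, Finset.mem_univ, and_true, Finset.subset_univ,
      true_and, Flush, SameSuit, Prod.exists]
    constructor
    · rintro ⟨hc, ⟨s, hs⟩, hv⟩
      refine ⟨handValues h, s, ⟨?_, hv⟩, ?_⟩
      · rw [handValues, Finset.card_image_of_injOn, hc]
        intro a ha b hb hab
        exact Prod.ext hab ((hs a ha).trans (hs b hb).symm)
      · ext ⟨v, t⟩
        simp only [handValues, Finset.mem_product, Finset.mem_image, Finset.mem_singleton]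
        constructor
        · rintro ⟨⟨⟨a, b⟩, hab, rfl⟩, rfl⟩
          have := hs _ hab
          simp only at this
          subst this
          exact hab
        · intro hm
          exact ⟨⟨_, hm, rfl⟩, hs _ hm⟩
    · rintro ⟨V, s, ⟨hc, hV⟩, rfl⟩
      refine ⟨by simp [hc], ⟨s, ?_⟩, ?_⟩
      · intro c hcm
        simpa using (Finset.mem_product.1 hcm).2
      · have : handValues (V ×ˢ ({s} : Finset (Fin 4))) = V := by
          ext v
          simp [handValues]
        rwa [this]
  rw [key, Finset.card_image_of_injOn, Finset.card_product, Finset.card_sdiff_of_subset,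
    Finset.card_powersetCard]
  · have : straightValueSets.card = 10 := by decide
    rw [this]
    simp [Nat.choose]
  · intro V hV
    refine Finset.mem_powersetCard.2 ⟨Finset.subset_univ _, ?_⟩
    simp only [straightValueSets, Finset.mem_insert, Finset.mem_singleton] at hV
    rcases hV with rfl | rfl | rfl | rfl | rfl | rfl | rfl | rfl | rfl | rfl <;> rfl
  · rintro ⟨V, s⟩ hV ⟨W, t⟩ hW heq
    simp only at heq
    have hc : V.card = 5 := by
      simp only [Finset.mem_coe, Finset.mem_product, Finset.mem_sdiff,
        Finset.mem_powersetCard] at hV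
      exact hV.1.1.2
    have hVW : V = W := by
      have := congrArg (Finset.image Prod.fst) heq
      rwa [Finset.product_image_fst (by simp), Finset.product_image_fst (by simp)] at this
    obtain ⟨v, hv⟩ : V.Nonempty := Finset.card_pos.1 (by omega)
    have hm : (v, s) ∈ W ×ˢ ({t} : Finset (Fin 4)) := by
      rw [← heq]; simp [hv]
    have hst : s = t := by simpa using (Finset.mem_product.1 hm).2
    rw [hVW, hst]
end

section
/- The number of Three of a Kind hands — 5-card hands for which there exists a value v such that exactly 3 cards of the hand have value v and the remaining 2 cards have two further distinct values (distinct from v and from each other) — equals 54912. -/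
/-- The profile of a three of a kind with values `t = (v, a, b)`. -/
def threeProfile (t : Fin 13 × Fin 13 × Fin 13) (x : Fin 13) : ℕ :=
  if x = t.1 then 3 else if x = t.2.1 then 1 else if x = t.2.2 then 1 else 0

/-- The admissible triples of values. -/
def threeTriples : Finset (Fin 13 × Fin 13 × Fin 13) :=
  Finset.univ.filter fun t => t.2.1 < t.2.2 ∧ t.2.1 ≠ t.1 ∧ t.2.2 ≠ t.1

/-- The hands with a given profile. -/
def profileHands (c : Fin 13 → ℕ) : Finset (Finset Card) :=
  Finset.univ.filter fun h => ∀ v, countValue h v = c v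

lemma countValue_eq (h : Finset Card) (v : Fin 13) :
    countValue h v = (Finset.univ.filter fun s : Fin 4 => (v, s) ∈ h).card := by
  unfold countValue
  refine Finset.card_nbij' (fun c => c.2) (fun s => (v, s)) ?_ ?_ ?_ ?_
  · rintro ⟨a, b⟩ hc
    simp at hc ⊢
    obtain ⟨h1, rfl⟩ := hc
    exact h1
  · intro s hs
    simpa using hs
  · rintro ⟨a, b⟩ hc
    simp at hc ⊢
    exact hc.2.symm
  · intro s hs
    rfl

lemma card_profileHands (c : Fin 13 → ℕ) :
    (profileHands c).card = ∏ v, Nat.choose 4 (c v) := by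
  have h1 : (profileHands c).card =
      (Fintype.piFinset fun v => Finset.powersetCard (c v) (Finset.univ : Finset (Fin 4))).card := by
    refine Finset.card_nbij' (fun h v => Finset.univ.filter fun s : Fin 4 => (v, s) ∈ h)
      (fun f => Finset.univ.filter fun p : Card => p.2 ∈ f p.1) ?_ ?_ ?_ ?_
    · intro h hh
      simpa [profileHands, countValue_eq, Finset.mem_powersetCard] using hh
    · intro f hf
      simpa [profileHands, countValue_eq, Finset.mem_powersetCard] using hf
    · intro h _
      ext ⟨a, b⟩
      simp
    · intro f _
      ext a b
      simp
  rw [h1, Fintype.card_piFinset]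
  simp [Finset.card_powersetCard]

lemma sum_countValue (h : Finset Card) : ∑ v, countValue h v = h.card :=
  (Finset.card_eq_sum_card_fiberwise (f := Prod.fst) (t := Finset.univ)
    (fun _ _ => by simp)).symm

lemma sum_threeProfile (t : Fin 13 × Fin 13 × Fin 13) (hab : t.2.1 ≠ t.2.2)
    (ha : t.2.1 ≠ t.1) (hb : t.2.2 ≠ t.1) : ∑ x, threeProfile t x = 5 := by
  have : ∀ x, threeProfile t x = (if x = t.1 then 3 else 0) + (if x = t.2.1 then 1 else 0)
      + (if x = t.2.2 then 1 else 0) := by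
    intro x
    unfold threeProfile
    grind
  simp [this, Finset.sum_add_distrib]

lemma prod_threeProfile (t : Fin 13 × Fin 13 × Fin 13) (hab : t.2.1 ≠ t.2.2)
    (ha : t.2.1 ≠ t.1) (hb : t.2.2 ≠ t.1) : ∏ x, Nat.choose 4 (threeProfile t x) = 64 := by
  have h3 : Nat.choose 4 3 = 4 := rfl
  have : ∀ x, Nat.choose 4 (threeProfile t x) = (if x = t.1 then 4 else 1) *
      (if x = t.2.1 then 4 else 1) * (if x = t.2.2 then 4 else 1) := by
    intro x
    unfold threeProfile
    split_ifs <;> simp_all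
  simp only [this, Finset.prod_mul_distrib, Finset.prod_ite_eq', Finset.mem_univ, if_true]
  norm_num

lemma profile_unique (h : Finset Card) (hc : h.card = 5) (t : Fin 13 × Fin 13 × Fin 13)
    (hab : t.2.1 ≠ t.2.2) (ha : t.2.1 ≠ t.1) (hb : t.2.2 ≠ t.1)
    (h1 : countValue h t.1 = 3) (h2 : countValue h t.2.1 = 1) (h3 : countValue h t.2.2 = 1)
    (x : Fin 13) : countValue h x = threeProfile t x := by
  have hle : ∀ y ∈ (Finset.univ : Finset (Fin 13)), threeProfile t y ≤ countValue h y := by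
    intro y _
    unfold threeProfile
    grind
  have := (Finset.sum_eq_sum_iff_of_le hle).1
    (by rw [sum_threeProfile t hab ha hb, sum_countValue, hc])
  exact (this x (Finset.mem_univ x)).symm

lemma threeHands_eq : pokerHands.filter ThreeOfAKind =
    threeTriples.biUnion fun t => profileHands (threeProfile t) := by
  ext h
  simp only [Finset.mem_filter, Finset.mem_biUnion, pokerHands, Finset.mem_powersetCard,
    threeTriples, profileHands, Finset.mem_univ, true_and, Finset.subset_univ]
  constructor
  · rintro ⟨hc, v, hv, a, b, hab, hav, hbv, ha, hb⟩
    rcases lt_or_gt_of_ne hab with hlt | hlt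
    · exact ⟨(v, a, b), ⟨hlt, hav, hbv⟩, profile_unique h hc (v, a, b) hab hav hbv hv ha hb⟩
    · exact ⟨(v, b, a), ⟨hlt, hbv, hav⟩, profile_unique h hc (v, b, a) hab.symm hbv hav hv hb ha⟩
  · rintro ⟨⟨v, a, b⟩, ⟨hlt, hav, hbv⟩, hp⟩
    simp only at hlt hav hbv
    refine ⟨?_, v, ?_, a, b, hlt.ne, hav, hbv, ?_, ?_⟩
    · rw [← sum_countValue, Finset.sum_congr rfl (fun x _ => hp x)]
      exact sum_threeProfile _ hlt.ne hav hbv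
    · simp [hp, threeProfile]
    · simp [hp, threeProfile, hav]
    · simp [hp, threeProfile, hbv]

lemma threeProfile_inj {t u : Fin 13 × Fin 13 × Fin 13} (ht : t ∈ threeTriples)
    (hu : u ∈ threeTriples) (h : ∀ x, threeProfile t x = threeProfile u x) : t = u := by
  obtain ⟨v, a, b⟩ := t
  obtain ⟨w, c, d⟩ := u
  simp only [threeTriples, Finset.mem_filter, Finset.mem_univ, true_and] at ht hu
  have h1 := h v
  have h2 := h a
  have h3 := h b
  simp only [threeProfile] at h1 h2 h3
  have hvw : v = w := by grind
  subst hvw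
  have e2 : a = c ∨ a = d := by grind
  have e3 : b = c ∨ b = d := by grind
  have : a = c ∧ b = d := by
    rcases e2 with rfl | rfl <;> rcases e3 with rfl | rfl <;> grind
  rw [this.1, this.2]

lemma card_threeTriples : threeTriples.card = 858 := by
  decide +kernel

/-- There are exactly 54912 Three of a Kind hands. -/
theorem card_threeOfAKind : (pokerHands.filter ThreeOfAKind).card = 54912 := by
  rw [threeHands_eq, Finset.card_biUnion]
  · rw [Finset.sum_congr rfl (g := fun _ => 64), Finset.sum_const, card_threeTriples]
    · rfl
    · intro t ht
      simp only [threeTriples, Finset.mem_filter, Finset.mem_univ, true_and] at ht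
      rw [card_profileHands, prod_threeProfile t ht.1.ne ht.2.1 ht.2.2]
  · intro t ht u hu htu
    refine Finset.disjoint_left.2 ?_
    intro h h1 h2
    simp only [profileHands, Finset.mem_filter, Finset.mem_univ, true_and] at h1 h2
    exact htu (threeProfile_inj ht hu fun x => (h1 x).symm.trans (h2 x))
end

section
/- The number of Two Pair hands — 5-card hands for which there exist distinct values v ≠ w such that exactly 2 cards of the hand have value v, exactly 2 cards have value w, and the remaining card has a value different from both v and w — equals 123552. -/
/-- Hands with exactly two cards of value `v` and two of value `w`. -/
def twoPairAt (v w : Fin 13) : Finset (Finset Card) :=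
  pokerHands.filter fun h => countValue h v = 2 ∧ countValue h w = 2

/-- Cards whose value is neither `v` nor `w`. -/
def restOf (h : Finset Card) (v w : Fin 13) : Finset Card :=
  h.filter fun c => c.1 ≠ v ∧ c.1 ≠ w

theorem card_split (h : Finset Card) {v w : Fin 13} (hvw : v ≠ w) :
    countValue h v + countValue h w + (restOf h v w).card = h.card := by
  unfold countValue restOf
  rw [← Finset.card_union_of_disjoint, ← Finset.card_union_of_disjoint]
  · congr 1
    ext c
    simp only [Finset.mem_union, Finset.mem_filter]
    tauto
  · rw [Finset.disjoint_left]
    intro c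
    simp only [Finset.mem_union, Finset.mem_filter]
    tauto
  · rw [Finset.disjoint_left]
    intro c
    simp only [Finset.mem_filter]
    rintro ⟨_, h1⟩ ⟨_, h2⟩
    exact hvw (h1.symm.trans h2)

theorem card_value (v : Fin 13) :
    ((Finset.univ : Finset Card).filter fun c => c.1 = v).card = 4 := by
  revert v; decide

theorem card_rest {v w : Fin 13} (hvw : v ≠ w) :
    (restOf Finset.univ v w).card = 44 := by
  have h := card_split Finset.univ hvw
  have hu : (Finset.univ : Finset Card).card = 52 := by simp [Card]
  rw [hu] at h
  unfold countValue at h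
  rw [card_value, card_value] at h
  omega

theorem card_twoPairAt {v w : Fin 13} (hvw : v ≠ w) : (twoPairAt v w).card = 1584 := by
  have key : (twoPairAt v w).card =
      (((Finset.univ : Finset Card).filter fun c => c.1 = v).powersetCard 2 ×ˢ
        (((Finset.univ : Finset Card).filter fun c => c.1 = w).powersetCard 2 ×ˢ
          (restOf Finset.univ v w).powersetCard 1)).card := by
    refine Finset.card_bij'
      (fun h _ => (h.filter (fun c => c.1 = v), h.filter (fun c => c.1 = w), restOf h v w))
      (fun p _ => p.1 ∪ p.2.1 ∪ p.2.2) ?_ ?_ ?_ ?_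
    · intro h hh
      simp only [twoPairAt, pokerHands, Finset.mem_filter, Finset.mem_powersetCard] at hh
      obtain ⟨⟨_, h5⟩, h1, h2⟩ := hh
      have := card_split h hvw
      simp only [Finset.mem_product, Finset.mem_powersetCard]
      refine ⟨⟨Finset.filter_subset_filter _ (Finset.subset_univ _), h1⟩,
        ⟨Finset.filter_subset_filter _ (Finset.subset_univ _), h2⟩,
        Finset.filter_subset_filter _ (Finset.subset_univ _), by omega⟩
    all_goals try
      rintro ⟨A, B, C⟩ hp
      simp only [Finset.mem_product, Finset.mem_powersetCard] at hp
      obtain ⟨⟨hA, cA⟩, ⟨hB, cB⟩, hC, cC⟩ := hp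
      have hA' : ∀ c ∈ A, c.1 = v := fun c hc => (Finset.mem_filter.1 (hA hc)).2
      have hB' : ∀ c ∈ B, c.1 = w := fun c hc => (Finset.mem_filter.1 (hB hc)).2
      have hC' : ∀ c ∈ C, c.1 ≠ v ∧ c.1 ≠ w := fun c hc => (Finset.mem_filter.1 (hC hc)).2
      have e1 : (A ∪ B ∪ C).filter (fun c => c.1 = v) = A := by
        ext c
        have := hA' c
        have := hB' c
        have := hC' c
        simp only [Finset.mem_filter, Finset.mem_union]
        grind
      have e2 : (A ∪ B ∪ C).filter (fun c => c.1 = w) = B := by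
        ext c
        have := hA' c
        have := hB' c
        have := hC' c
        simp only [Finset.mem_filter, Finset.mem_union]
        grind
      have e3 : restOf (A ∪ B ∪ C) v w = C := by
        ext c
        have := hA' c
        have := hB' c
        have := hC' c
        simp only [restOf, Finset.mem_filter, Finset.mem_union]
        grind
    · have := card_split (A ∪ B ∪ C) hvw
      simp only [twoPairAt, pokerHands, Finset.mem_filter, Finset.mem_powersetCard]
      unfold countValue at *
      rw [e1, e2, e3] at this
      rw [e1, e2]
      exact ⟨⟨Finset.subset_univ _, by omega⟩, cA, cB⟩
    · intro h _
      ext c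
      simp only [restOf, Finset.mem_filter, Finset.mem_union]
      tauto
    · simp only [e1, e2, e3]
  rw [key]
  simp only [Finset.card_product, Finset.card_powersetCard, card_value, card_rest hvw]
  decide

theorem third_value {h : Finset Card} (h5 : h.card = 5) {v w x : Fin 13} (hvw : v ≠ w)
    (hv : countValue h v = 2) (hw : countValue h w = 2) (hx : countValue h x = 2) :
    x = v ∨ x = w := by
  by_contra hne
  rw [not_or] at hne
  have h1 := card_split h hvw
  have h2 : countValue h x ≤ (restOf h v w).card := by
    apply Finset.card_le_card
    intro c hc
    simp only [restOf, Finset.mem_filter] at hc ⊢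
    obtain ⟨hc, rfl⟩ := hc
    exact ⟨hc, hne⟩
  omega

theorem twoPair_eq : pokerHands.filter TwoPair =
    ((Finset.univ : Finset (Fin 13 × Fin 13)).filter fun p => p.1 < p.2).biUnion
      fun p => twoPairAt p.1 p.2 := by
  ext h
  simp only [Finset.mem_biUnion, Finset.mem_filter, Finset.mem_univ, true_and, twoPairAt,
    Prod.exists]
  constructor
  · rintro ⟨hh, v, w, hvw, hv, hw, _⟩
    rcases lt_or_gt_of_ne hvw with hlt | hlt
    · exact ⟨v, w, hlt, hh, hv, hw⟩
    · exact ⟨w, v, hlt, hh, hw, hv⟩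
  · rintro ⟨v, w, hlt, hh, hv, hw⟩
    refine ⟨hh, v, w, hlt.ne, hv, hw, ?_⟩
    have h1 := card_split h hlt.ne
    have h5 : h.card = 5 := (Finset.mem_powersetCard.1 hh).2
    have hpos : 0 < (restOf h v w).card := by omega
    obtain ⟨c, hc⟩ := Finset.card_pos.1 hpos
    exact ⟨c, (Finset.mem_filter.1 hc).1, (Finset.mem_filter.1 hc).2⟩

/-- There are exactly 123552 Two Pair hands. -/
theorem card_twoPair : (pokerHands.filter TwoPair).card = 123552 := by
  rw [twoPair_eq, Finset.card_biUnion]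
  · rw [Finset.sum_congr rfl (g := fun _ => 1584)
      (fun p hp => card_twoPairAt (Finset.mem_filter.1 hp).2.ne), Finset.sum_const]
    have : ((Finset.univ : Finset (Fin 13 × Fin 13)).filter fun p => p.1 < p.2).card = 78 := by
      decide
    rw [this]
    norm_num
  · rintro ⟨v, w⟩ hp ⟨v', w'⟩ hq hne
    have hp := (Finset.mem_filter.1 hp).2
    have hq := (Finset.mem_filter.1 hq).2
    rw [Function.onFun, Finset.disjoint_left]
    intro h h1 h2
    simp only [twoPairAt, Finset.mem_filter] at h1 h2 hp hq
    obtain ⟨hh, hv, hw⟩ := h1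
    obtain ⟨_, hv', hw'⟩ := h2
    have h5 : h.card = 5 := (Finset.mem_powersetCard.1 hh).2
    have a1 := third_value h5 hp.ne hv hw hv'
    have a2 := third_value h5 hp.ne hv hw hw'
    apply hne
    rcases a1 with rfl | rfl <;> rcases a2 with rfl | rfl
    · exact absurd hq (lt_irrefl _)
    · rfl
    · exact absurd hq hp.asymm
    · exact absurd hq (lt_irrefl _)
end

section
/- The number of High Card hands — 5-card hands whose 5 cards have 5 pairwise distinct values, whose set of values is not a straight value-set, and whose cards do not all have the same suit — equals 1302540. -/
/-- The hand determined by a choice of suit for every value in `V`. -/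
def handOf (V : Finset (Fin 13)) (f : V → Fin 4) : Finset Card :=
  Finset.univ.image fun v : V => ((v : Fin 13), f v)

theorem mem_handOf (V : Finset (Fin 13)) (f : V → Fin 4) (c : Card) :
    c ∈ handOf V f ↔ ∃ h : c.1 ∈ V, f ⟨c.1, h⟩ = c.2 := by
  obtain ⟨a, b⟩ := c
  simp [handOf]

theorem handOf_injective (V : Finset (Fin 13)) : Function.Injective (handOf V) := by
  intro f g h
  funext v
  have h1 : ((v : Fin 13), f v) ∈ handOf V f := (mem_handOf _ _ _).2 ⟨v.2, rfl⟩
  rw [h] at h1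
  obtain ⟨_, h2⟩ := (mem_handOf _ _ _).1 h1
  exact h2.symm

theorem card_handOf (V : Finset (Fin 13)) (f : V → Fin 4) : (handOf V f).card = V.card := by
  unfold handOf
  rw [Finset.card_image_of_injective]
  · simp
  · intro a b h
    exact Subtype.ext (congrArg Prod.fst h)

theorem handValues_handOf (V : Finset (Fin 13)) (f : V → Fin 4) :
    handValues (handOf V f) = V := by
  ext a
  simp only [handValues, Finset.mem_image, mem_handOf]
  constructor
  · rintro ⟨c, ⟨h, _⟩, rfl⟩
    exact h
  · intro h
    exact ⟨(a, f ⟨a, h⟩), ⟨h, rfl⟩, rfl⟩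

theorem sameSuit_handOf (V : Finset (Fin 13)) (f : V → Fin 4) :
    SameSuit (handOf V f) ↔ ∃ s, ∀ v, f v = s := by
  unfold SameSuit
  refine exists_congr fun s => ⟨fun h v => ?_, fun h c hc => ?_⟩
  · exact h ((v : Fin 13), f v) ((mem_handOf _ _ _).2 ⟨v.2, rfl⟩)
  · obtain ⟨h1, h2⟩ := (mem_handOf _ _ _).1 hc
    rw [← h2, h]

theorem exists_handOf (h : Finset Card) (hc : h.card = (handValues h).card) :
    ∃ f, handOf (handValues h) f = h := by
  have hinj : Set.InjOn Prod.fst (h : Set Card) := Finset.card_image_iff.1 hc.symm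
  have hex : ∀ v : handValues h, ∃ s, ((v : Fin 13), s) ∈ h := by
    rintro ⟨v, hv⟩
    obtain ⟨c, hc, rfl⟩ := Finset.mem_image.1 hv
    exact ⟨c.2, hc⟩
  choose f hf using hex
  refine ⟨f, ?_⟩
  apply Finset.eq_of_subset_of_card_le
  · intro c hc
    obtain ⟨h1, h2⟩ := (mem_handOf _ _ _).1 hc
    have := hf ⟨c.1, h1⟩
    rw [h2] at this
    exact this
  · rw [card_handOf, hc]

theorem card_nonconst (V : Finset (Fin 13)) (hV : V.card = 5) :
    (Finset.univ.filter fun f : V → Fin 4 => ¬ ∃ s, ∀ v, f v = s).card = 1020 := by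
  have hne : Nonempty V := by
    have : V.Nonempty := Finset.card_pos.1 (by omega)
    exact this.to_subtype
  have h1 : (Finset.univ.filter fun f : V → Fin 4 => ∃ s, ∀ v, f v = s)
      = Finset.univ.image (fun s : Fin 4 => Function.const V s) := by
    ext f
    simp only [Finset.mem_filter, Finset.mem_univ, true_and, Finset.mem_image]
    exact exists_congr fun s => ⟨fun h => funext fun v => (h v).symm, fun h v => by rw [← h]; rfl⟩
  have h2 : (Finset.univ.filter fun f : V → Fin 4 => ∃ s, ∀ v, f v = s).card = 4 := by
    rw [h1, Finset.card_image_of_injective _ Function.const_injective]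
    rfl
  have h3 := Finset.card_filter_add_card_filter_not (s := (Finset.univ : Finset (V → Fin 4)))
    (fun f => ∃ s, ∀ v, f v = s)
  have h4 : (Finset.univ : Finset (V → Fin 4)).card = 1024 := by
    simp [hV]
  omega

theorem card_values :
    ((Finset.univ : Finset (Fin 13)).powersetCard 5 \ straightValueSets).card = 1277 := by
  rw [Finset.card_sdiff_of_subset, Finset.card_powersetCard]
  · have : straightValueSets.card = 10 := by decide
    rw [this]
    norm_num [Nat.choose]
  · intro V hV
    have : ∀ V ∈ straightValueSets, V.card = 5 := by
      simp only [straightValueSets, Finset.mem_insert, Finset.mem_singleton]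
      rintro V (rfl | rfl | rfl | rfl | rfl | rfl | rfl | rfl | rfl | rfl) <;> rfl
    exact Finset.mem_powersetCard.2 ⟨Finset.subset_univ _, this V hV⟩

/-- There are exactly 1302540 High Card hands. -/
theorem card_highCard : (pokerHands.filter HighCard).card = 1302540 := by
  rw [Finset.card_eq_sum_card_fiberwise (f := handValues)
    (t := (Finset.univ : Finset (Fin 13)).powersetCard 5 \ straightValueSets)]
  · rw [Finset.sum_const_nat (m := 1020), card_values]
    intro V hV
    obtain ⟨hV1, hV2⟩ := Finset.mem_sdiff.1 hV
    have hV5 := (Finset.mem_powersetCard.1 hV1).2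
    rw [← card_nonconst V hV5, ← Finset.card_image_of_injective _ (handOf_injective V)]
    congr 1
    ext h
    simp only [Finset.mem_filter, Finset.mem_image, Finset.mem_univ, true_and, pokerHands,
      Finset.mem_powersetCard, HighCard]
    constructor
    · rintro ⟨⟨⟨_, h5⟩, hv5, _, hs⟩, rfl⟩
      obtain ⟨f, hf⟩ := exists_handOf h (by rw [h5, hv5])
      refine ⟨f, ?_, hf⟩
      rw [← sameSuit_handOf, hf]
      exact hs
    · rintro ⟨f, hf, rfl⟩
      rw [handValues_handOf, card_handOf, sameSuit_handOf]
      exact ⟨⟨⟨Finset.subset_univ _, hV5⟩, hV5, hV2, hf⟩, rfl⟩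
  · intro h hh
    have hh' := (Finset.mem_filter.1 (Finset.mem_coe.1 hh)).2
    exact Finset.mem_coe.2 (Finset.mem_sdiff.2
      ⟨Finset.mem_powersetCard.2 ⟨Finset.subset_univ _, hh'.1⟩, hh'.2.1⟩)
end
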